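/- arXiv:1808.04642 — 2 statements merged into one kernel-verified Lean document; each statement's English description precedes it below -/
import Mathlib

section
/- Let (W,U,N) be a polarity, ε an order type over n, R an f-type relation with order type ε, and 1 ≤ i ≤ n with ε(i) = ∂. Suppose that for every j ≠ i the set X_j ⊆ W^ε(j) is Galois-stable. Then for every Y ⊆ U, R⁰[X̄ⁱ_Y] = R⁰[X̄ⁱ_{(Y↓)↑}]. (Lemma 3.5, item 1(ii).) -/
universe u

/-- For `X ⊆ W`, `up N X = X↑ = {u ∈ U : N x u for all x ∈ X}`. -/
def up {W U : Type u} (N : W → U → Prop) (X : Set W) : Set U := {u | ∀ x ∈ X, N x u}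

/-- For `Y ⊆ U`, `dn N Y = Y↓ = {w ∈ W : N w u for all u ∈ Y}`. -/
def dn {W U : Type u} (N : W → U → Prop) (Y : Set U) : Set W := {w | ∀ u ∈ Y, N w u}

/-- A subset `X ⊆ W` is Galois-stable if `X = (X↑)↓`. -/
def stableW {W U : Type u} (N : W → U → Prop) (X : Set W) : Prop := X = dn N (up N X)

/-- A subset `Y ⊆ U` is Galois-stable if `Y = (Y↓)↑`. -/
def stableU {W U : Type u} (N : W → U → Prop) (Y : Set U) : Prop := Y = up N (dn N Y)

/-- `coordType W U b` is `W` if `b = true` (order type 1) and `U` if `b = false` (order type ∂). -/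
def coordType (W U : Type u) (b : Bool) : Type u := cond b W U

/-- `S⁰[C̄] = {a : (a, b̄) ∈ S for all b̄ ∈ C₁ × ⋯ × Cₙ}`. -/
def rel0 {A : Type u} {n : ℕ} {B : Fin n → Type u} (S : A → (∀ i, B i) → Prop)
    (C : ∀ i, Set (B i)) : Set A :=
  {a | ∀ b : ∀ i, B i, (∀ i, b i ∈ C i) → S a b}

/-- `Sⁱ[A', C̄ⁱ] = {x ∈ B i : (a, b̄ⁱ_x) ∈ S for all a ∈ A' and all b_j ∈ C_j (j ≠ i)}`
(the `i`-th entry of `C` is ignored). -/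
def reli {A : Type u} {n : ℕ} {B : Fin n → Type u} (S : A → (∀ i, B i) → Prop)
    (i : Fin n) (A' : Set A) (C : ∀ j, Set (B j)) : Set (B i) :=
  {x | ∀ a ∈ A', ∀ b : ∀ j, B j, (∀ j, j ≠ i → b j ∈ C j) → S a (Function.update b i x)}

/-- Galois-stability for a subset of `W^ε(i)` (as a subset of `W` or of `U` accordingly). -/
def coordStable {W U : Type u} (N : W → U → Prop) :
    (b : Bool) → Set (coordType W U b) → Prop
  | true, X => stableW N X
  | false, Y => stableU N Y

/-- `R` is an f-type relation with order type `ε`: `R ⊆ U × W^ε(1) × ⋯ × W^ε(n)` such that the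
sets `R⁰[{w̄}]` and `Rⁱ[{u}, {w̄}ⁱ]` are all Galois-stable. -/
def isFType {W U : Type u} (N : W → U → Prop) {n : ℕ} (ε : Fin n → Bool)
    (R : U → (∀ i, coordType W U (ε i)) → Prop) : Prop :=
  (∀ w : ∀ i, coordType W U (ε i),
    stableU N (rel0 R fun i => ({w i} : Set (coordType W U (ε i))))) ∧
  (∀ (u : U) (w : ∀ i, coordType W U (ε i)) (i : Fin n),
    coordStable N (ε i) (reli R i {u} fun j => ({w j} : Set (coordType W U (ε j)))))

/-- The Galois closure on subsets of `W^ε(i)`: `(·↑)↓` on subsets of `W`, `(·↓)↑` on subsets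
of `U`. -/
def coordCl {W U : Type u} (N : W → U → Prop) :
    (b : Bool) → Set (coordType W U b) → Set (coordType W U b)
  | true, X => dn N (up N X)
  | false, Y => up N (dn N Y)

/-!
The point `a` lies in `R⁰[X̄ⁱ_Y]` exactly when `Y` is contained in the section `Rⁱ[{a}, X̄ⁱ]`. This
section is the intersection of the sections `Rⁱ[{a}, {w̄}ⁱ]` with `w_j ∈ X_j` for `j ≠ i`, all of
which are Galois-stable, so it is Galois-stable itself; hence it contains `Y` if and only if it
contains the closure of `Y`.
-/

section Sections

variable {A : Type u} {n : ℕ} {B : Fin n → Type u} (S : A → (∀ j, B j) → Prop) (i : Fin n)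

theorem mem_rel0_update_iff (C : ∀ j, Set (B j)) (Y : Set (B i)) (a : A) :
    a ∈ rel0 S (Function.update C i Y) ↔ Y ⊆ reli S i {a} C := by
  constructor
  · rintro ha y hy _ rfl b hb
    refine ha _ fun j => ?_
    rcases eq_or_ne j i with rfl | hj
    · simpa only [Function.update_self] using hy
    · simpa only [Function.update_of_ne hj] using hb j hj
  · intro hY b hb
    have hbi : b i ∈ Y := by simpa only [Function.update_self] using hb i
    have hbC : ∀ j, j ≠ i → b j ∈ C j := fun j hj => by
      simpa only [Function.update_of_ne hj] using hb j
    simpa only [Function.update_eq_self] using hY hbi a rfl b hbC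

theorem reli_anti {A₁ A₂ : Set A} {C D : ∀ j, Set (B j)} (hA : A₁ ⊆ A₂)
    (hCD : ∀ j, j ≠ i → C j ⊆ D j) : reli S i A₂ D ⊆ reli S i A₁ C :=
  fun _ hx a ha b hb => hx a (hA ha) b fun j hj => hCD j hj (hb j hj)

variable {S i} {c : ClosureOperator (Set (B i))}

theorem isClosed_reli (hS : ∀ a (w : ∀ j, B j), c.IsClosed (reli S i {a} fun j => {w j}))
    (A' : Set A) (C : ∀ j, Set (B j)) : c.IsClosed (reli S i A' C) := by
  refine c.isClosed_iff_closure_le.2 fun x hx a ha w hw => ?_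
  have hsub : reli S i A' C ⊆ reli S i {a} fun j => {w j} :=
    reli_anti S i (Set.singleton_subset_iff.2 ha) fun j hj => Set.singleton_subset_iff.2 (hw j hj)
  have hxw : x ∈ reli S i {a} fun j => {w j} := c.closure_min hsub (hS a w) hx
  exact hxw a rfl w fun _ _ => rfl

theorem rel0_update_closure (hS : ∀ a (w : ∀ j, B j), c.IsClosed (reli S i {a} fun j => {w j}))
    (C : ∀ j, Set (B j)) (Y : Set (B i)) :
    rel0 S (Function.update C i (c Y)) = rel0 S (Function.update C i Y) := by
  ext a
  rw [mem_rel0_update_iff, mem_rel0_update_iff]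
  exact (isClosed_reli hS {a} C).closure_le_iff

end Sections

section Polarity

variable {W U : Type u} (N : W → U → Prop)

/-- The Galois closure `coordCl N b` on subsets of `coordType W U b`, bundled as a closure
operator: Mathlib's closure of extents on `W` and of intents on `U`, for the formal context `N`. -/
def coordClosure : (b : Bool) → ClosureOperator (Set (coordType W U b))
  | true => extentClosure N
  | false => intentClosure N

theorem coordClosure_apply : ∀ (b : Bool) (Z : Set (coordType W U b)),
    coordClosure N b Z = coordCl N b Z
  | true, _ => rfl
  | false, _ => rfl

variable {N}

theorem isClosed_coordClosure_iff : ∀ {b : Bool} {Z : Set (coordType W U b)},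
    (coordClosure N b).IsClosed Z ↔ coordStable N b Z
  | true, _ => (extentClosure N).isClosed_iff.trans eq_comm
  | false, _ => (intentClosure N).isClosed_iff.trans eq_comm

theorem fType_rel0_closure_partial_general {A : Type u} {n : ℕ} {ε : Fin n → Bool}
    {R : A → (∀ j, coordType W U (ε j)) → Prop} {i : Fin n}
    (hR : ∀ a (w : ∀ j, coordType W U (ε j)),
      coordStable N (ε i) (reli R i {a} fun j => {w j}))
    (X : ∀ j, Set (coordType W U (ε j))) (Y : Set (coordType W U (ε i))) :
    rel0 R (Function.update X i Y) = rel0 R (Function.update X i (coordCl N (ε i) Y)) := by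
  rw [← coordClosure_apply, rel0_update_closure fun a w => isClosed_coordClosure_iff.2 (hR a w)]

end Polarity

/-- Lemma 3.5, item 1(ii): if `ε(i) = ∂` and `X_j` is Galois-stable for all `j ≠ i`, then for
every `Y ⊆ U`, `R⁰[X̄ⁱ_Y] = R⁰[X̄ⁱ_{(Y↓)↑}]`. -/
theorem fType_rel0_closure_partial {W U : Type u} (N : W → U → Prop) {n : ℕ} (ε : Fin n → Bool)
    (R : U → (∀ i, coordType W U (ε i)) → Prop) (hR : isFType N ε R)
    (i : Fin n) (hi : ε i = false)
    (X : ∀ j, Set (coordType W U (ε j)))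
    (hX : ∀ j, j ≠ i → coordStable N (ε j) (X j))
    (Y : Set (coordType W U (ε i))) :
    rel0 R (Function.update X i Y) = rel0 R (Function.update X i (coordCl N (ε i) Y)) :=
  fType_rel0_closure_partial_general (fun u w => hR.2 u w i) X Y
end

section
/- Let (W,U,N) be a polarity, ε an order type over n, R an f-type relation with order type ε, and 1 ≤ i ≤ n with ε(i) = 1. Let X_j ⊆ W be Galois-stable for every j ≠ i, and let 𝒳 be any family of Galois-stable subsets of W. Then ⋁_{Z ∈ 𝒳} f_R(X̄ⁱ_Z) = f_R(X̄ⁱ_{⋁𝒳}), where ⋁𝒳 = ((⋃𝒳)↑)↓ is the join in the complete lattice of Galois-stable subsets of W. (Proposition 3.7, case f with ε(i) = 1: f_R is completely join-preserving in its i-th coordinate.) -/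
universe u

/-- The `i`-th entry of `X̄^ε`: `X_i` if `ε(i) = 1` and `X_i↑` if `ε(i) = ∂`. -/
def epsCoordF {W U : Type u} (N : W → U → Prop) :
    (b : Bool) → Set W → Set (coordType W U b)
  | true, X => X
  | false, X => up N X

/-- `f_R(X̄) := (R⁰[X̄^ε])↓`. -/
def fR {W U : Type u} (N : W → U → Prop) {n : ℕ} (ε : Fin n → Bool)
    (R : U → (∀ i, coordType W U (ε i)) → Prop) (X : Fin n → Set W) : Set W :=
  dn N (rel0 R fun i => epsCoordF N (ε i) (X i))

/-!
Fix the coordinates other than `i`. The maps `D ↦ R⁰[C̄ⁱ_D]` and `A ↦ Rⁱ[A, C̄ⁱ]` form an antitone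
Galois connection, so the first turns unions into intersections. Since every `Rⁱ[A, C̄ⁱ]` is
Galois-stable, `R⁰` does not distinguish `D` from its Galois closure. Hence `R⁰` at `⋁𝒳` is the
intersection of its values at the `Z ∈ 𝒳`; these values are Galois-stable, so they are the sets
`f_R(X̄ⁱ_Z)↑`, and applying `↓` to their intersection gives the join of the `f_R(X̄ⁱ_Z)`.
-/

open Function Order OrderDual

section GaloisSections

variable {A : Type u} {n : ℕ} {B : Fin n → Type u} (S : A → (∀ i, B i) → Prop)

theorem rel0_eq_iInter_singleton (C : ∀ i, Set (B i)) :
    rel0 S C = ⋂ b ∈ Set.univ.pi C, rel0 S fun i ↦ {b i} := by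
  ext a
  simp [rel0, ← funext_iff]

theorem reli_eq_iInter_singleton (i : Fin n) (A' : Set A) (C : ∀ j, Set (B j)) :
    reli S i A' C = ⋂ a ∈ A', ⋂ b ∈ ({i}ᶜ : Set (Fin n)).pi C, reli S i {a} fun j ↦ {b j} := by
  ext x
  simp only [reli, Set.mem_iInter, Set.mem_ofPred_eq, Set.mem_singleton_iff, forall_eq]
  refine ⟨fun h a ha b hb c hc ↦ h a ha c fun j hj ↦ ?_, fun h a ha b hb ↦ h a ha b hb b ?_⟩
  · rw [hc j hj]
    exact hb j hj
  · exact fun _ _ ↦ rfl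

variable {S}

theorem subset_rel0_update_iff {i : Fin n} {A' : Set A} {C : ∀ j, Set (B j)} {D : Set (B i)} :
    A' ⊆ rel0 S (update C i D) ↔ D ⊆ reli S i A' C := by
  constructor
  · intro h x hx a ha b hb
    refine h ha _ ((forall_update_iff b fun j y ↦ y ∈ update C i D j).2 ⟨?_, fun j hj ↦ ?_⟩)
    · simpa using hx
    · simpa [hj] using hb j hj
  · intro h a ha b hb
    have hbi : b i ∈ D := by simpa using hb i
    have hbj : ∀ j, j ≠ i → b j ∈ C j := fun j hj ↦ by simpa [hj] using hb j
    simpa using h hbi a ha b hbj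

variable (S)

theorem gc_rel0_reli (i : Fin n) (C : ∀ j, Set (B j)) :
    GaloisConnection (toDual ∘ fun D ↦ rel0 S (update C i D))
      ((fun A' ↦ reli S i A' C) ∘ ofDual) :=
  fun _ _ ↦ subset_rel0_update_iff

theorem rel0_update_iUnion₂ {ι : Sort*} {κ : ι → Sort*} (i : Fin n) (C : ∀ j, Set (B j))
    (D : ∀ k, κ k → Set (B i)) :
    rel0 S (update C i (⋃ (k) (l), D k l)) = ⋂ (k) (l), rel0 S (update C i (D k l)) :=
  (gc_rel0_reli S i C).l_iSup₂

end GaloisSections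

section Stability

variable {W U : Type u} {N : W → U → Prop}

theorem up_eq_upperPolar : up N = upperPolar N := rfl

theorem stableW_iff_isExtent {X : Set W} : stableW N X ↔ IsExtent N X :=
  eq_comm.trans isExtent_iff.symm

theorem stableU_iff_isIntent {Y : Set U} : stableU N Y ↔ IsIntent N Y :=
  eq_comm.trans isIntent_iff.symm

theorem coordStable.iInter {b : Bool} {ι : Sort*} {S : ι → Set (coordType W U b)}
    (hS : ∀ k, coordStable N b (S k)) : coordStable N b (⋂ k, S k) := by
  cases b with
  | true => exact stableW_iff_isExtent.2 (.iInter S fun k ↦ stableW_iff_isExtent.1 (hS k))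
  | false => exact stableU_iff_isIntent.2 (.iInter S fun k ↦ stableU_iff_isIntent.1 (hS k))

theorem coordStable.epsCoordF_dn_up_subset_iff {b : Bool} {S : Set (coordType W U b)}
    (hS : coordStable N b S) {Z : Set W} :
    epsCoordF N b (dn N (up N Z)) ⊆ S ↔ epsCoordF N b Z ⊆ S := by
  cases b with
  | true =>
    exact ⟨(subset_lowerPolar_upperPolar N Z).trans,
      (stableW_iff_isExtent.1 hS).lowerPolar_upperPolar_subset⟩
  | false => exact (congrArg (· ⊆ S) (upperPolar_lowerPolar_upperPolar N Z)).to_iff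

theorem epsCoordF_sUnion {b : Bool} (hb : b = true) (𝒳 : Set (Set W)) :
    epsCoordF N b (⋃₀ 𝒳) = ⋃ Z ∈ 𝒳, epsCoordF N b Z := by
  subst hb
  exact Set.sUnion_eq_biUnion

end Stability

section FType

variable {W U : Type u} {N : W → U → Prop} {n : ℕ} {ε : Fin n → Bool}
  {R : U → (∀ i, coordType W U (ε i)) → Prop}

theorem isFType.stableU_rel0 (hR : isFType N ε R) (C : ∀ i, Set (coordType W U (ε i))) :
    stableU N (rel0 R C) := by
  rw [rel0_eq_iInter_singleton, stableU_iff_isIntent]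
  exact .iInter₂ _ fun w _ ↦ stableU_iff_isIntent.1 (hR.1 w)

theorem isFType.coordStable_reli (hR : isFType N ε R) (i : Fin n) (Y : Set U)
    (C : ∀ j, Set (coordType W U (ε j))) : coordStable N (ε i) (reli R i Y C) := by
  rw [reli_eq_iInter_singleton]
  exact .iInter fun u ↦ .iInter fun _ ↦ .iInter fun w ↦ .iInter fun _ ↦ hR.2 u w i

theorem isFType.up_fR (hR : isFType N ε R) (X : Fin n → Set W) :
    up N (fR N ε R X) = rel0 R fun j ↦ epsCoordF N (ε j) (X j) :=
  (hR.stableU_rel0 _).symm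

theorem isFType.rel0_update_epsCoordF_dn_up (hR : isFType N ε R) (i : Fin n)
    (C : ∀ j, Set (coordType W U (ε j))) (Z : Set W) :
    rel0 R (update C i (epsCoordF N (ε i) (dn N (up N Z)))) =
      rel0 R (update C i (epsCoordF N (ε i) Z)) :=
  eq_of_forall_le_iff fun Y ↦ by
    simp only [subset_rel0_update_iff,
      (hR.coordStable_reli i Y C).epsCoordF_dn_up_subset_iff]

theorem epsCoordF_update (i : Fin n) (X : Fin n → Set W) (Z : Set W) :
    (fun j ↦ epsCoordF N (ε j) (update X i Z j)) =
      update (fun j ↦ epsCoordF N (ε j) (X j)) i (epsCoordF N (ε i) Z) :=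
  funext <| apply_update (fun j ↦ epsCoordF N (ε j)) X i Z

theorem isFType.rel0_epsCoordF_update_join (hR : isFType N ε R) {i : Fin n} (hi : ε i = true)
    (X : Fin n → Set W) (𝒳 : Set (Set W)) :
    rel0 R (fun j ↦ epsCoordF N (ε j) (update X i (dn N (up N (⋃₀ 𝒳))) j)) =
      ⋂ Z ∈ 𝒳, rel0 R fun j ↦ epsCoordF N (ε j) (update X i Z j) := by
  simp only [epsCoordF_update, hR.rel0_update_epsCoordF_dn_up, epsCoordF_sUnion hi,
    rel0_update_iUnion₂]

end FType

theorem fR_completely_join_preserving_general {W U : Type u} (N : W → U → Prop) {n : ℕ}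
    (ε : Fin n → Bool) (R : U → (∀ i, coordType W U (ε i)) → Prop) (hR : isFType N ε R)
    (i : Fin n) (hi : ε i = true) (X : Fin n → Set W) (𝒳 : Set (Set W)) :
    dn N (up N (⋃ Z ∈ 𝒳, fR N ε R (update X i Z)))
      = fR N ε R (update X i (dn N (up N (⋃₀ 𝒳)))) :=
  calc
    dn N (up N (⋃ Z ∈ 𝒳, fR N ε R (update X i Z)))
      = dn N (⋂ Z ∈ 𝒳, up N (fR N ε R (update X i Z))) := by
        rw [up_eq_upperPolar, upperPolar_iUnion₂]
    _ = dn N (⋂ Z ∈ 𝒳, rel0 R fun j ↦ epsCoordF N (ε j) (update X i Z j)) := by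
        simp only [hR.up_fR]
    _ = fR N ε R (update X i (dn N (up N (⋃₀ 𝒳)))) := by
        rw [fR, hR.rel0_epsCoordF_update_join hi]

/-- Proposition 3.7, case `f` with `ε(i) = 1`: `f_R` is completely join-preserving in its `i`-th
coordinate: `⋁_{Z ∈ 𝒳} f_R(X̄ⁱ_Z) = f_R(X̄ⁱ_{⋁𝒳})`, where `⋁𝒳 = ((⋃𝒳)↑)↓`. -/
theorem fR_completely_join_preserving {W U : Type u} (N : W → U → Prop) {n : ℕ}
    (ε : Fin n → Bool)
    (R : U → (∀ i, coordType W U (ε i)) → Prop) (hR : isFType N ε R)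
    (i : Fin n) (hi : ε i = true)
    (X : Fin n → Set W) (hX : ∀ j, j ≠ i → stableW N (X j))
    (𝒳 : Set (Set W)) (h𝒳 : ∀ Z ∈ 𝒳, stableW N Z) :
    dn N (up N (⋃ Z ∈ 𝒳, fR N ε R (Function.update X i Z)))
      = fR N ε R (Function.update X i (dn N (up N (⋃₀ 𝒳)))) :=
  fR_completely_join_preserving_general N ε R hR i hi X 𝒳
end
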